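/- arXiv:math/0701528 — 2 statements merged into one kernel-verified Lean document; each statement's English description precedes it below -/
import Mathlib

section
/- Let S = {x_1,…,x_n} be a factor-closed set of distinct positive integers and let F(r; n_1,…,n_k) be a k-variable function that is even mod r for every r ∈ ℕ, with finite Fourier coefficients α_r. Let I = {2,3,…,k+1} if k is even and I = {1,2,…,k+1} if k is odd. Then the hyperdeterminant of the (k+1)-dimensional matrix (F(x_{i_1}; x_{i_2},…,x_{i_{k+1}}))_{1≤i_1,…,i_{k+1}≤n} with signature I equals (x_1⋯x_n)^k · ∏_{v=1}^n α_{x_v}(x_v,…,x_v). -/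
/-!
Write `E(a,b) = [x_a ∣ x_b]`. Because `F` is even mod `x_v` and the set is factor-closed, Möbius
inversion in each of the `k` variables gives
`F(x_v; x_{b_1},…,x_{b_k}) = ∑_d B(v; d) ∏_i E(d_i, b_i)`, where `B(v; d)` is the Möbius transform
of `F(x_v; ·)` at `(x_{d_1},…,x_{d_k})` and is zero unless every `x_{d_i}` divides `x_v`
(`eq_sum_moebTransform`).

The number of signed axes is even, so the permutation on the first axis may be taken to be the
identity, which absorbs the factor `1/n!` (`hypDet_eq_sum`). Substituting the expansion and summing
over the other permutations yields `∑_D ∏_v B(v; D_v) ∏_i det E(D_{v,i}, w)_{v,w}`. A term survives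
only if each `v ↦ D_{v,i}` is injective with `x_{D_{v,i}} ∣ x_v`, which forces `D_{v,i} = v`; as
`det E = 1`, the sum is `∏_v B(v; v,…,v)` (`signed_sum_eq`). Finally `c(m,1) = μ(m)` identifies
`B(v; v,…,v)` with `x_v^k α_{x_v}(x_v,…,x_v)` (`moebTransform_diag`).
-/

open scoped BigOperators

/-- The Cayley hyperdeterminant with signature `I` of a `k`-dimensional matrix of
order `n`, the `k` axes being indexed by the finite type `ι`:
`det_I A = (1/n!) ∑_{σ_1,…,σ_k ∈ S_n} ∏_{j∈I} sgn(σ_j) ∏_{v=1}^n A(σ_1(v),…,σ_k(v))`. -/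
noncomputable def hypDet {ι : Type*} [Fintype ι] [DecidableEq ι] (n : ℕ)
    (I : Finset ι) (A : (ι → Fin n) → ℂ) : ℂ :=
  ((n.factorial : ℂ))⁻¹ *
    ∑ σ : ι → Equiv.Perm (Fin n),
      (∏ j ∈ I, ((Equiv.Perm.sign (σ j) : ℤ) : ℂ)) * ∏ v : Fin n, A (fun j => σ j v)

/-- The Ramanujan sum `c(k,n) = ∑_{d ∣ gcd(k,n)} μ(k/d) d`, as a complex number. -/
noncomputable def ramCC (k n : ℕ) : ℂ :=
  ∑ d ∈ (Nat.gcd k n).divisors, ((ArithmeticFunction.moebius (k / d) : ℤ) : ℂ) * d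

/-- The finite Fourier coefficients of a `k`-variable function even mod `r`:
`α_r(d_1,…,d_k) = r^{-k} ∑_{δ_1,…,δ_k ∣ r} F(r;δ_1,…,δ_k) ∏_i c(r/δ_i, r/d_i)`. -/
noncomputable def alphaHat (k : ℕ) (F : ℕ → (Fin k → ℕ) → ℂ) (r : ℕ)
    (d : Fin k → ℕ) : ℂ :=
  ((r : ℂ) ^ k)⁻¹ *
    ∑ δ ∈ Fintype.piFinset (fun _ : Fin k => r.divisors),
      F r δ * ∏ i : Fin k, ramCC (r / δ i) (r / d i)

theorem sum_moebius_divisors {m : ℕ} :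
    ∑ e ∈ m.divisors, ((ArithmeticFunction.moebius e : ℤ) : ℂ) = if m = 1 then 1 else 0 := by
  have h := congrArg (fun f : ArithmeticFunction ℤ => f m)
    ArithmeticFunction.coe_zeta_mul_moebius
  simp only [ArithmeticFunction.coe_zeta_mul_apply, ArithmeticFunction.one_apply] at h
  rw [← Int.cast_sum, h]
  split_ifs <;> simp

/-- The incidence-algebra Möbius function `μ(δ,d)` of the divisibility order. -/
noncomputable def moebKernel (δ d : ℕ) : ℂ :=
  if δ ∣ d then ((ArithmeticFunction.moebius (d / δ) : ℤ) : ℂ) else 0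

theorem sum_moebKernel {δ g : ℕ} (hδ : 0 < δ) (hg : 0 < g) :
    ∑ d ∈ g.divisors, moebKernel δ d = if δ = g then 1 else 0 := by
  by_cases hdvd : δ ∣ g
  · obtain ⟨m, rfl⟩ := hdvd
    have hm : 0 < m := Nat.pos_of_mul_pos_left hg
    have h1 : ∑ d ∈ (δ * m).divisors, moebKernel δ d
        = ∑ e ∈ m.divisors, ((ArithmeticFunction.moebius e : ℤ) : ℂ) := by
      unfold moebKernel
      rw [← Finset.sum_filter]
      symm
      refine Finset.sum_bij (fun e _ => δ * e) ?_ ?_ ?_ ?_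
      · intro e he
        simp only [Finset.mem_filter, Nat.mem_divisors] at he ⊢
        exact ⟨⟨Nat.mul_dvd_mul_left δ he.1, hg.ne'⟩, Dvd.intro _ rfl⟩
      · intro a _ b _ hab
        exact Nat.eq_of_mul_eq_mul_left hδ hab
      · intro b hb
        simp only [Finset.mem_filter, Nat.mem_divisors] at hb
        obtain ⟨⟨hb1, -⟩, c, rfl⟩ := hb
        exact ⟨c, Nat.mem_divisors.2 ⟨Nat.dvd_of_mul_dvd_mul_left hδ hb1, hm.ne'⟩, rfl⟩
      · intro a _
        rw [Nat.mul_div_cancel_left _ hδ]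
    rw [h1, sum_moebius_divisors]
    refine if_congr ?_ rfl rfl
    constructor
    · rintro rfl
      simp
    · intro h
      exact Nat.eq_of_mul_eq_mul_left hδ (by omega)
  · rw [if_neg (by rintro rfl; exact hdvd dvd_rfl)]
    refine Finset.sum_eq_zero fun d hd => ?_
    unfold moebKernel
    exact if_neg fun h => hdvd (h.trans (Nat.dvd_of_mem_divisors hd))

/-- The total weight `∑ x` is invariant under a bijection, which forces equality in every
`x (f v) ≤ x v`. -/
theorem eq_id_of_dvd {n : ℕ} {x : Fin n → ℕ} (hxpos : ∀ v, 0 < x v)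
    (hxinj : Function.Injective x) {f : Fin n → Fin n} (hf : Function.Injective f)
    (hdvd : ∀ v, x (f v) ∣ x v) : f = id := by
  have hle : ∀ v ∈ Finset.univ, x (f v) ≤ x v := fun v _ => Nat.le_of_dvd (hxpos v) (hdvd v)
  have hsum : ∑ v, x (f v) = ∑ v, x v :=
    (Equiv.ofBijective f (Finite.injective_iff_bijective.1 hf)).sum_comp x
  funext v
  exact hxinj ((Finset.sum_eq_sum_iff_of_le hle).1 hsum v (Finset.mem_univ v))

/-- The divisibility matrix `E(a,b) = [x_a ∣ x_b]`. -/
def dvdMatrix {n : ℕ} (x : Fin n → ℕ) : Matrix (Fin n) (Fin n) ℂ :=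
  fun a b => if x a ∣ x b then 1 else 0

theorem det_dvdMatrix {n : ℕ} {x : Fin n → ℕ} (hxpos : ∀ v, 0 < x v)
    (hxinj : Function.Injective x) : (dvdMatrix x).det = 1 := by
  rw [Matrix.det_apply, Finset.sum_eq_single 1]
  · simp [dvdMatrix]
  · intro σ _ hσ
    have : ∃ v, ¬ x (σ v) ∣ x v := by
      by_contra! h
      exact hσ (Equiv.ext fun v => congrFun (eq_id_of_dvd hxpos hxinj σ.injective h) v)
    obtain ⟨v, hv⟩ := this
    rw [Finset.prod_eq_zero (Finset.mem_univ v) (by simp [dvdMatrix, hv]), smul_zero]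
  · simp

/-- Row selections `f` that satisfy `x_{f v} ∣ x_v` give a singular submatrix, unless `f = id`. -/
theorem det_dvdMatrix_submatrix {n : ℕ} {x : Fin n → ℕ} (hxpos : ∀ v, 0 < x v)
    (hxinj : Function.Injective x) {f : Fin n → Fin n}
    (hdvd : ∀ v, x (f v) ∣ x v) (hf : f ≠ id) : ((dvdMatrix x).submatrix f id).det = 0 := by
  have : ¬ Function.Injective f := fun h => hf (eq_id_of_dvd hxpos hxinj h hdvd)
  simp only [Function.Injective, not_forall] at this
  obtain ⟨a, b, hab, hne⟩ := this
  refine Matrix.det_zero_of_row_eq hne ?_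
  funext j
  simp [hab]

/-- The signs of the first axis cancel because the number of signed axes is even, so the
permutation on that axis can be normalised to the identity. -/
theorem hypDet_eq_sum {n k : ℕ} (A : Fin n → (Fin k → Fin n) → ℂ) :
    hypDet n
        (if Even k then Finset.univ.filter (fun j : Fin (k + 1) => j ≠ 0)
          else Finset.univ)
        (fun idx : Fin (k + 1) → Fin n => A (idx 0) (fun i : Fin k => idx i.succ))
      = ∑ τ : Fin k → Equiv.Perm (Fin n),
          (∏ i, ((Equiv.Perm.sign (τ i) : ℤ) : ℂ)) * ∏ v, A v (fun i => τ i v) := by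
  unfold hypDet
  rw [← (Fin.consEquiv (fun _ => Equiv.Perm (Fin n))).sum_comp, Fintype.sum_prod_type]
  have key : ∀ s : Equiv.Perm (Fin n), ∑ τ : Fin k → Equiv.Perm (Fin n),
      (∏ j ∈ (if Even k then Finset.univ.filter (fun j : Fin (k + 1) => j ≠ 0)
          else Finset.univ), ((Equiv.Perm.sign
            ((Fin.consEquiv (fun _ => Equiv.Perm (Fin n))) (s, τ) j) : ℤ) : ℂ)) *
        ∏ v, A ((Fin.consEquiv (fun _ => Equiv.Perm (Fin n))) (s, τ) 0 v)
          (fun i => (Fin.consEquiv (fun _ => Equiv.Perm (Fin n))) (s, τ) i.succ v)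
      = ∑ τ : Fin k → Equiv.Perm (Fin n),
          (∏ i, ((Equiv.Perm.sign (τ i) : ℤ) : ℂ)) * ∏ v, A v (fun i => τ i v) := by
    intro s
    rw [← Equiv.sum_comp (Equiv.mulRight (fun _ : Fin k => s))]
    refine Finset.sum_congr rfl fun τ _ => ?_
    have hs : (((Equiv.Perm.sign s : ℤ) : ℂ)) * ((Equiv.Perm.sign s : ℤ) : ℂ) = 1 := by
      rcases Int.units_eq_one_or (Equiv.Perm.sign s) with h | h <;> simp [h]
    congr 1
    · split_ifs with hk
      · rw [Finset.prod_filter, Fin.prod_univ_succ]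
        obtain ⟨m, rfl⟩ := hk
        simp [Fin.succ_ne_zero, Finset.prod_mul_distrib, pow_add, ← mul_pow, hs]
      · obtain ⟨m, rfl⟩ := Nat.not_even_iff_odd.1 hk
        rw [Fin.prod_univ_succ]
        simp only [Fin.consEquiv_apply, Fin.cons_zero, Fin.cons_succ, Equiv.coe_mulRight,
          Pi.mul_apply, Equiv.Perm.sign_mul, Units.val_mul, Int.cast_mul,
          Finset.prod_mul_distrib, Finset.prod_const, Finset.card_univ, Fintype.card_fin]
        rw [pow_succ, pow_mul, pow_two, hs, one_pow, one_mul, mul_left_comm, hs, mul_one]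
    · exact Equiv.prod_comp s (fun v => A v (fun i => τ i v))
  rw [Finset.sum_congr rfl fun s _ => key s, Finset.sum_const, Finset.card_univ,
    Fintype.card_perm, Fintype.card_fin, nsmul_eq_mul, ← mul_assoc, inv_mul_cancel₀, one_mul]
  exact_mod_cast n.factorial_ne_zero

/-- Core evaluation: if `A` is obtained from `B` by applying the divisibility matrix along each
of the `k` signed axes, and `B v d` vanishes unless `x_{d_i} ∣ x_v` for all `i`, then only the
diagonal of `B` contributes. -/
theorem signed_sum_eq {n k : ℕ} {x : Fin n → ℕ} (hxpos : ∀ v, 0 < x v)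
    (hxinj : Function.Injective x) (A B : Fin n → (Fin k → Fin n) → ℂ)
    (hA : ∀ v b, A v b = ∑ d : Fin k → Fin n, B v d * ∏ i, dvdMatrix x (d i) (b i))
    (hB : ∀ v d i, ¬ x (d i) ∣ x v → B v d = 0) :
    ∑ τ : Fin k → Equiv.Perm (Fin n),
        (∏ i, ((Equiv.Perm.sign (τ i) : ℤ) : ℂ)) * ∏ v, A v (fun i => τ i v)
      = ∏ v, B v (fun _ => v) := by
  -- Expanding the product over `v` and summing over each `τ i` separately produces determinants.
  have h1 : ∑ τ : Fin k → Equiv.Perm (Fin n),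
        (∏ i, ((Equiv.Perm.sign (τ i) : ℤ) : ℂ)) * ∏ v, A v (fun i => τ i v)
      = ∑ D : Fin n → Fin k → Fin n,
          (∏ v, B v (D v)) * ∏ i, ((dvdMatrix x).submatrix (fun v => D v i) id).det := by
    simp only [hA, Finset.prod_univ_sum, Fintype.piFinset_univ, Finset.mul_sum]
    rw [Finset.sum_comm]
    refine Finset.sum_congr rfl fun D _ => ?_
    have h2 : ∀ i, ((dvdMatrix x).submatrix (fun v => D v i) id).det
        = ∑ σ : Equiv.Perm (Fin n), ((Equiv.Perm.sign σ : ℤ) : ℂ) *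
            ∏ v, dvdMatrix x (D v i) (σ v) := by
      intro i
      rw [← Matrix.det_transpose, Matrix.det_apply']
      rfl
    simp only [h2, Finset.prod_univ_sum, Fintype.piFinset_univ, Finset.mul_sum]
    refine Finset.sum_congr rfl fun τ _ => ?_
    rw [Finset.prod_mul_distrib, Finset.prod_mul_distrib, Finset.prod_comm]
    ring
  rw [h1, Finset.sum_eq_single (fun v _ => v)]
  · have : (dvdMatrix x).submatrix (fun v => v) id = dvdMatrix x := rfl
    simp [this, det_dvdMatrix hxpos hxinj]
  · intro D _ hD
    by_cases h : ∀ v i, x (D v i) ∣ x v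
    · have : ∃ i, (fun v => D v i) ≠ id := by
        by_contra! h'
        exact hD (funext fun v => funext fun i => congrFun (h' i) v)
      obtain ⟨i, hi⟩ := this
      rw [Finset.prod_eq_zero (Finset.mem_univ i)
        (det_dvdMatrix_submatrix hxpos hxinj (fun v => h v i) hi), mul_zero]
    · push Not at h
      obtain ⟨v, i, hv⟩ := h
      rw [Finset.prod_eq_zero (Finset.mem_univ v) (hB v (D v) i hv), zero_mul]
  · simp

/-- The multivariable Möbius transform of `F(x_v; ·)` at `(x_{d_1},…,x_{d_k})`, cut off to the
tuples all of whose entries divide `x_v`. -/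
noncomputable def moebTransform {n k : ℕ} (x : Fin n → ℕ) (F : ℕ → (Fin k → ℕ) → ℂ)
    (v : Fin n) (d : Fin k → Fin n) : ℂ :=
  ∑ δ ∈ Fintype.piFinset (fun _ : Fin k => (x v).divisors),
    F (x v) δ * ∏ i, (if x (d i) ∣ x v then moebKernel (δ i) (x (d i)) else 0)

theorem sum_dvd_moebKernel {n : ℕ} {x : Fin n → ℕ} (hxpos : ∀ v, 0 < x v)
    (hxinj : Function.Injective x)
    (hfc : ∀ v : Fin n, ∀ d : ℕ, d ∣ x v → ∃ w : Fin n, x w = d)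
    (v b : Fin n) {δ : ℕ} (hδ : 0 < δ) :
    ∑ d : Fin n, (if x d ∣ x v then moebKernel δ (x d) else 0) * dvdMatrix x d b
      = if δ = Nat.gcd (x b) (x v) then 1 else 0 := by
  have hg : 0 < Nat.gcd (x b) (x v) := Nat.gcd_pos_of_pos_left _ (hxpos b)
  rw [← sum_moebKernel hδ hg]
  have : ∀ d, (if x d ∣ x v then moebKernel δ (x d) else 0) * dvdMatrix x d b
      = if x d ∈ (Nat.gcd (x b) (x v)).divisors then moebKernel δ (x d) else 0 := by
    intro d
    simp only [dvdMatrix, Nat.mem_divisors, Nat.dvd_gcd_iff]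
    by_cases h1 : x d ∣ x v <;> by_cases h2 : x d ∣ x b <;> simp [h1, h2, (hxpos b).ne']
  rw [Finset.sum_congr rfl fun d _ => this d, ← Finset.sum_filter]
  refine Finset.sum_bij (fun d _ => x d) ?_ ?_ ?_ ?_
  · intro d hd
    exact (Finset.mem_filter.1 hd).2
  · intro a _ b _ h
    exact hxinj h
  · intro e he
    obtain ⟨w, rfl⟩ := hfc b e ((Nat.dvd_of_mem_divisors he).trans (Nat.gcd_dvd_left _ _))
    exact ⟨w, by simpa using he, rfl⟩
  · intros
    rfl

/-- Möbius inversion in `k` variables, over the factor-closed set. -/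
theorem eq_sum_moebTransform {n k : ℕ} {x : Fin n → ℕ} (hxpos : ∀ v, 0 < x v)
    (hxinj : Function.Injective x)
    (hfc : ∀ v : Fin n, ∀ d : ℕ, d ∣ x v → ∃ w : Fin n, x w = d)
    {F : ℕ → (Fin k → ℕ) → ℂ}
    (heven : ∀ r : ℕ, 0 < r → ∀ nn : Fin k → ℕ, (∀ i, 0 < nn i) →
      F r (fun i => Nat.gcd (nn i) r) = F r nn) (v : Fin n) (b : Fin k → Fin n) :
    F (x v) (fun i => x (b i))
      = ∑ d : Fin k → Fin n, moebTransform x F v d * ∏ i, dvdMatrix x (d i) (b i) := by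
  unfold moebTransform
  simp only [Finset.sum_mul]
  rw [Finset.sum_comm, ← heven (x v) (hxpos v) _ (fun i => hxpos (b i)),
    Finset.sum_eq_single (fun i => Nat.gcd (x (b i)) (x v))]
  all_goals
    try simp only [mul_assoc, ← Finset.prod_mul_distrib, ← Finset.mul_sum]
  · rw [← Fintype.piFinset_univ, ← Finset.prod_univ_sum (fun _ => Finset.univ)
      (fun i d => (if x d ∣ x v then moebKernel (Nat.gcd (x (b i)) (x v)) (x d) else 0) *
        dvdMatrix x d (b i))]
    rw [Finset.prod_eq_one fun i _ => ?_, mul_one]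
    rw [sum_dvd_moebKernel hxpos hxinj hfc v _ (Nat.gcd_pos_of_pos_left _ (hxpos _)), if_pos rfl]
  · intro δ hδ hne
    obtain ⟨i, hi⟩ := Function.ne_iff.1 hne
    have hpos : ∀ i, 0 < δ i := fun i =>
      Nat.pos_of_mem_divisors (Fintype.mem_piFinset.1 hδ i)
    rw [← Fintype.piFinset_univ, ← Finset.prod_univ_sum (fun _ => Finset.univ)
      (fun i d => (if x d ∣ x v then moebKernel (δ i) (x d) else 0) * dvdMatrix x d (b i)),
      Finset.prod_eq_zero (Finset.mem_univ i), mul_zero]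
    rw [sum_dvd_moebKernel hxpos hxinj hfc v _ (hpos i), if_neg hi]
  · intro h
    refine absurd (Fintype.mem_piFinset.2 fun i => ?_) h
    exact Nat.mem_divisors.2 ⟨Nat.gcd_dvd_right _ _, (hxpos v).ne'⟩

/-- Since `c(m,1) = μ(m)`, the diagonal Fourier coefficient is a normalised Möbius transform. -/
theorem moebTransform_diag {n k : ℕ} {x : Fin n → ℕ} (hxpos : ∀ v, 0 < x v)
    (F : ℕ → (Fin k → ℕ) → ℂ) (v : Fin n) :
    moebTransform x F v (fun _ => v) = (x v : ℂ) ^ k * alphaHat k F (x v) (fun _ => x v) := by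
  have hx : (x v : ℂ) ≠ 0 := by exact_mod_cast (hxpos v).ne'
  unfold moebTransform alphaHat
  rw [mul_inv_cancel_left₀ (pow_ne_zero k hx)]
  refine Finset.sum_congr rfl fun δ hδ => ?_
  congr 1
  refine Finset.prod_congr rfl fun i _ => ?_
  have hd : δ i ∣ x v := Nat.dvd_of_mem_divisors (Fintype.mem_piFinset.1 hδ i)
  simp [moebKernel, ramCC, hd, Nat.div_self (hxpos v)]

/-- Theorem 4.6: for a factor-closed set `S = {x_1,…,x_n}` and a `k`-variable
function `F(r;n_1,…,n_k)` even mod `r`, with `I = {2,…,k+1}` for even `k` and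
`I = {1,…,k+1}` for odd `k` (position `1` is index `0` here),
`det_I(F(x_{i_1};x_{i_2},…,x_{i_{k+1}})) = (x_1⋯x_n)^k ∏_{v=1}^n α_{x_v}(x_v,…,x_v)`. -/
theorem stmt_18 (n : ℕ) (hn : 0 < n) (x : Fin n → ℕ)
    (hxpos : ∀ v, 0 < x v) (hxinj : Function.Injective x)
    (hfc : ∀ v : Fin n, ∀ d : ℕ, d ∣ x v → ∃ w : Fin n, x w = d)
    (k : ℕ) (hk : 1 ≤ k) (F : ℕ → (Fin k → ℕ) → ℂ)
    (heven : ∀ r : ℕ, 0 < r → ∀ nn : Fin k → ℕ, (∀ i, 0 < nn i) →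
      F r (fun i => Nat.gcd (nn i) r) = F r nn) :
    hypDet n
        (if Even k then Finset.univ.filter (fun j : Fin (k + 1) => j ≠ 0)
          else Finset.univ)
        (fun idx : Fin (k + 1) → Fin n =>
          F (x (idx 0)) (fun i : Fin k => x (idx i.succ)))
      = (∏ v : Fin n, (x v : ℂ)) ^ k *
          ∏ v : Fin n, alphaHat k F (x v) (fun _ => x v) := by
  rw [hypDet_eq_sum (fun v b => F (x v) (fun i => x (b i))),
    signed_sum_eq hxpos hxinj _ (moebTransform x F)
      (eq_sum_moebTransform hxpos hxinj hfc heven)]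
  · simp only [moebTransform_diag hxpos, Finset.prod_mul_distrib, Finset.prod_pow]
  · intro v d i hi
    refine Finset.sum_eq_zero fun δ _ => ?_
    rw [Finset.prod_eq_zero (Finset.mem_univ i) (if_neg hi), mul_zero]
end

section
/- Let S = {x_1,…,x_n} be a factor-closed set of distinct positive integers, m ≥ 1, γ = (γ_1,…,γ_m) ∈ ℕ^m, f_1,…,f_{m+1} arithmetic functions, and ξ an arbitrary m-variable arithmetic function. Let I = {2,3,…,m+1} if m is even and I = {1,2,…,m+1} if m is odd. Then det_I( S^{γ,ξ}_{f_1,…,f_{m+1}}(x_{i_1},…,x_{i_{m+1}}) )_{1≤i_1,…,i_{m+1}≤n} = (f_1(1)⋯f_m(1))^n · ∏_{v=1}^n ξ(x_v,…,x_v) f_{m+1}^{[lcm(γ_1,…,γ_m)]}(x_v). -/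
/-!
Expanding the Ramanujan sums over the factor-closed set (`mRamW_eq_sum`) writes the entry at
`(i_0, …, i_m)` as a sum over chains `k_1, …, k_m` of a weight depending on `i_0` and the `k_j`,
times the divisibility indicators `[x_{k_j} ∣ x_{i_j}]`.  In the hyperdeterminant each of the axes
`1, …, m` is signed and enters only through the indicators, so its sum over permutations is
the determinant of a row selection `κ_j` of the incidence matrix of divisibility on `S`: it
vanishes unless `κ_j` is a permutation, and then equals `sgn κ_j` (`sum_sign_divInd`).

The weight is supported on chains with `x_{k_m} ∣ ⋯ ∣ x_{k_1} ∣ x_{i_0}`.  Two permutations `a, b`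
with `x_{b(v)} ∣ x_{a(v)}` for all `v` coincide (`eq_of_forall_x_dvd`), since both `∑ x_{b(v)}` and
`∑ x_{a(v)}` equal `∑ x_v`.  Hence only `κ_1 = ⋯ = κ_m = σ_0` survives; the number of signed
axes being even, the signs cancel, and each of the `n!` choices of `σ_0` contributes the same
product.  Finally `a_{γ_1} ⋯ a_{γ_m} = a_{lcm(γ_1, …, γ_m)}` (`aPow_foldr_lcm`).
-/


open scoped BigOperators

/-- The weighted multiple Ramanujan sum `S^{γ,ξ}_{f}(n_1,…,n_{m+1})`, where the
weight `ξ` receives the list `[d_1^{γ_1},…,d_m^{γ_m}]`.  By the convention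
`f(x) = 0` for non-integral `x`, the defining sum collapses to this recursion. -/
noncomputable def mRamW : List ℕ → List (ℕ → ℂ) → (List ℕ → ℂ) → List ℕ → ℂ
  | [], f :: _, ξ, n :: _ => ξ [] * f n
  | γ :: γs, f :: fs, ξ, n₁ :: n₂ :: ns =>
      ∑ d ∈ (Nat.gcd n₁ n₂).divisors.filter (fun d => d ^ γ ∣ Nat.gcd n₁ n₂),
        f (n₁ / d ^ γ) * mRamW γs fs (fun l => ξ (d ^ γ :: l)) (d ^ γ :: ns)
  | _, _, _, _ => 0

open Classical in
/-- `a_γ(n) = 1` if `n` is the γ-th power of a positive integer, `0` otherwise. -/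
noncomputable def aPow (γ n : ℕ) : ℂ :=
  if ∃ d : ℕ, 0 < d ∧ n = d ^ γ then 1 else 0

/-! ### Perfect powers and least common multiples -/

theorem aPow_lcm {a b n : ℕ} (ha : 0 < a) (hb : 0 < b) :
    aPow (Nat.lcm a b) n = aPow a n * aPow b n := by
  have key : (∃ d : ℕ, 0 < d ∧ n = d ^ Nat.lcm a b) ↔
      (∃ d : ℕ, 0 < d ∧ n = d ^ a) ∧ (∃ d : ℕ, 0 < d ∧ n = d ^ b) := by
    constructor
    · rintro ⟨d, hd, rfl⟩
      obtain ⟨s, hs⟩ := Nat.dvd_lcm_left a b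
      obtain ⟨t, ht⟩ := Nat.dvd_lcm_right a b
      refine ⟨⟨d ^ s, by positivity, ?_⟩, ⟨d ^ t, by positivity, ?_⟩⟩
      · rw [← pow_mul, mul_comm s a, ← hs]
      · rw [← pow_mul, mul_comm t b, ← ht]
    · rintro ⟨⟨d, hd, rfl⟩, ⟨e, he, h⟩⟩
      obtain ⟨c, hc, -⟩ := Nat.exists_eq_pow_of_pow_eq_pow (Or.inl ha.ne') h
      have hba : b / Nat.gcd a b * a = Nat.lcm a b := by
        rw [Nat.lcm, mul_comm, Nat.mul_div_assoc _ (Nat.gcd_dvd_right a b)]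
      have hz : b / Nat.gcd a b ≠ 0 :=
        (Nat.div_pos (Nat.le_of_dvd hb (Nat.gcd_dvd_right a b))
          (Nat.gcd_pos_of_pos_left b ha)).ne'
      refine ⟨c, Nat.pos_of_ne_zero ?_, ?_⟩
      · rintro rfl
        rw [hc, zero_pow hz] at hd
        exact lt_irrefl 0 hd
      · conv_lhs => rw [hc, ← pow_mul]
        exact congrArg _ hba
  unfold aPow
  by_cases h1 : ∃ d : ℕ, 0 < d ∧ n = d ^ a <;> by_cases h2 : ∃ d : ℕ, 0 < d ∧ n = d ^ b <;>
    simp [key, h1, h2]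

theorem aPow_one {n : ℕ} (hn : 0 < n) : aPow 1 n = 1 := by
  unfold aPow
  exact if_pos ⟨n, hn, (pow_one n).symm⟩

theorem foldr_lcm_pos : ∀ {m : ℕ} (γ : Fin m → ℕ), (∀ j, 0 < γ j) →
    0 < (List.ofFn γ).foldr Nat.lcm 1
  | 0, γ, _ => by simp
  | m + 1, γ, hγ => by
    rw [List.ofFn_succ, List.foldr_cons]
    exact Nat.lcm_pos (hγ 0) (foldr_lcm_pos _ fun j => hγ j.succ)

theorem aPow_foldr_lcm {N : ℕ} (hN : 0 < N) : ∀ {m : ℕ} (γ : Fin m → ℕ), (∀ j, 0 < γ j) →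
    aPow ((List.ofFn γ).foldr Nat.lcm 1) N = ∏ j, aPow (γ j) N
  | 0, γ, _ => by simpa using aPow_one hN
  | m + 1, γ, hγ => by
    rw [List.ofFn_succ, List.foldr_cons, aPow_lcm (hγ 0) (foldr_lcm_pos _ fun j => hγ j.succ),
      Fin.prod_univ_succ,
      aPow_foldr_lcm hN _ (fun j => hγ j.succ)]

/-! ### Expansion of the Ramanujan sums over a factor-closed set -/

/-- The indicator of divisibility `[a ∣ b]`. -/
noncomputable def divInd (a b : ℕ) : ℂ := if a ∣ b then 1 else 0

/-- The factor `a_γ(b) f(a / b)` of a Ramanujan sum that links the consecutive chain members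
`a` and `b`, equal to `0` if `b` does not divide `a`. -/
noncomputable def link (γ : ℕ) (f : ℕ → ℂ) (a b : ℕ) : ℂ :=
  aPow γ b * if b ∣ a then f (a / b) else 0

/-- The weight of the chain `x_{i₀}, x_{k_1}, …, x_{k_m}` in the expansion of a multiple
Ramanujan sum: everything except the divisibility conditions `x_{k_j} ∣ n_{j+1}`. -/
noncomputable def chainW {n m : ℕ} (x : Fin n → ℕ) (γ : Fin m → ℕ) (f : Fin (m + 1) → ℕ → ℂ)
    (ξ : List ℕ → ℂ) (i₀ : Fin n) (k : Fin m → Fin n) : ℂ :=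
  ξ (List.ofFn fun j => x (k j)) *
    ((∏ j : Fin m, link (γ j) (f j.castSucc)
        (x ((Fin.cons i₀ k : Fin (m + 1) → Fin n) j.castSucc)) (x (k j))) *
      f (Fin.last m) (x ((Fin.cons i₀ k : Fin (m + 1) → Fin n) (Fin.last m))))

theorem chainW_cons {n m : ℕ} (x : Fin n → ℕ) (γ : Fin (m + 1) → ℕ)
    (f : Fin (m + 2) → ℕ → ℂ) (ξ : List ℕ → ℂ) (i₀ k₀ : Fin n) (k : Fin m → Fin n) :
    chainW x γ f ξ i₀ (Fin.cons k₀ k) = link (γ 0) (f 0) (x i₀) (x k₀) *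
      chainW x (fun j => γ j.succ) (fun j => f j.succ) (fun l => ξ (x k₀ :: l)) k₀ k := by
  unfold chainW
  rw [Fin.prod_univ_succ, List.ofFn_succ]
  simp only [Fin.cons_zero, Fin.cons_succ, Fin.castSucc_zero, Fin.castSucc_succ, ← Fin.succ_last]
  ring

/-- One level of the recursion for `mRamW`: the variable `d ^ γ`, a divisor of `x a`, is replaced by
the index `k` with `x k = d ^ γ`. -/
theorem sum_divisors_eq {n : ℕ} {x : Fin n → ℕ} (hxpos : ∀ v, 0 < x v)
    (hxinj : Function.Injective x) (hfc : ∀ v : Fin n, ∀ d : ℕ, d ∣ x v → ∃ w : Fin n, x w = d)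
    {γ : ℕ} (hγ : 0 < γ) (f : ℕ → ℂ) (a b : Fin n) (g : ℕ → ℂ) :
    ∑ d ∈ (Nat.gcd (x a) (x b)).divisors.filter (fun d => d ^ γ ∣ Nat.gcd (x a) (x b)),
        f (x a / d ^ γ) * g (d ^ γ) =
      ∑ k, link γ f (x a) (x k) * divInd (x k) (x b) * g (x k) := by
  classical
  have hgcd : Nat.gcd (x a) (x b) ≠ 0 := (Nat.gcd_pos_of_pos_left _ (hxpos a)).ne'
  have hex : ∀ d ∈ (Nat.gcd (x a) (x b)).divisors.filter
      (fun d => d ^ γ ∣ Nat.gcd (x a) (x b)), ∃ w, x w = d ^ γ := fun d hd =>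
    hfc a _ ((Finset.mem_filter.mp hd).2.trans (Nat.gcd_dvd_left _ _))
  have : Nonempty (Fin n) := ⟨a⟩
  choose! w hw using hex
  have hR : ∀ k, link γ f (x a) (x k) * divInd (x k) (x b) * g (x k) =
      if ((∃ d : ℕ, 0 < d ∧ x k = d ^ γ) ∧ x k ∣ x a ∧ x k ∣ x b)
        then f (x a / x k) * g (x k) else 0 := by
    intro k
    unfold link divInd aPow
    by_cases h1 : ∃ d : ℕ, 0 < d ∧ x k = d ^ γ <;> by_cases h2 : x k ∣ x a <;>
      by_cases h3 : x k ∣ x b <;> simp only [h1, h2, h3] <;> simp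
  rw [Finset.sum_congr rfl fun k _ => hR k, ← Finset.sum_filter]
  refine Finset.sum_bij (fun d _ => w d) ?_ ?_ ?_ ?_
  · intro d hd
    have h := (Finset.mem_filter.mp hd)
    have hd0 : 0 < d := Nat.pos_of_mem_divisors h.1
    refine Finset.mem_filter.mpr ⟨Finset.mem_univ _, ⟨d, hd0, hw d hd⟩, ?_, ?_⟩
    · rw [hw d hd]; exact h.2.trans (Nat.gcd_dvd_left _ _)
    · rw [hw d hd]; exact h.2.trans (Nat.gcd_dvd_right _ _)
  · intro d hd e he h
    have : d ^ γ = e ^ γ := by rw [← hw d hd, ← hw e he, h]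
    exact Nat.pow_left_injective hγ.ne' this
  · intro k hk
    obtain ⟨-, ⟨d, hd0, hd⟩, h1, h2⟩ := Finset.mem_filter.mp hk
    have h3 : d ^ γ ∣ Nat.gcd (x a) (x b) := hd ▸ Nat.dvd_gcd h1 h2
    have hm : d ∈ (Nat.gcd (x a) (x b)).divisors.filter
        (fun d => d ^ γ ∣ Nat.gcd (x a) (x b)) :=
      Finset.mem_filter.mpr
        ⟨Nat.mem_divisors.mpr ⟨(dvd_pow_self d hγ.ne').trans h3, hgcd⟩, h3⟩
    exact ⟨d, hm, hxinj ((hw d hm).trans hd.symm)⟩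
  · intro d hd
    rw [hw d hd]

/-- On a factor-closed set the variables `d_j^{γ_j}` of the Ramanujan sum run over the set itself,
so the sum becomes one over index chains. -/
theorem mRamW_eq_sum {n : ℕ} {x : Fin n → ℕ} (hxpos : ∀ v, 0 < x v)
    (hxinj : Function.Injective x)
    (hfc : ∀ v : Fin n, ∀ d : ℕ, d ∣ x v → ∃ w : Fin n, x w = d) :
    ∀ {m : ℕ} (γ : Fin m → ℕ) (_ : ∀ j, 0 < γ j) (f : Fin (m + 1) → ℕ → ℂ) (ξ : List ℕ → ℂ)
      (i₀ : Fin n) (i : Fin m → Fin n),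
      mRamW (List.ofFn γ) (List.ofFn f) ξ (x i₀ :: List.ofFn fun j => x (i j)) =
        ∑ k : Fin m → Fin n, chainW x γ f ξ i₀ k * ∏ j, divInd (x (k j)) (x (i j))
  | 0, γ, _, f, ξ, i₀, i => by
    simp [chainW, mRamW, Fin.last]
  | m + 1, γ, hγ, f, ξ, i₀, i => by
    rw [List.ofFn_succ (f := γ), List.ofFn_succ (f := f),
      List.ofFn_succ (f := fun j => x (i j)), mRamW]
    rw [sum_divisors_eq hxpos hxinj hfc (hγ 0) (f 0) i₀ (i 0)
      (fun e => mRamW (List.ofFn fun j => γ j.succ) (List.ofFn fun j => f j.succ)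
        (fun l => ξ (e :: l)) (e :: List.ofFn fun j : Fin m => x (i j.succ)))]
    rw [← (Fin.consEquiv fun _ : Fin (m + 1) => Fin n).sum_comp, Fintype.sum_prod_type]
    refine Finset.sum_congr rfl fun k₀ _ => ?_
    rw [mRamW_eq_sum hxpos hxinj hfc (fun j => γ j.succ) (fun j => hγ j.succ)
      (fun j => f j.succ) _ k₀ (fun j => i j.succ), Finset.mul_sum]
    refine Finset.sum_congr rfl fun k _ => ?_
    have he : (Fin.consEquiv fun _ : Fin (m + 1) => Fin n) (k₀, k) = Fin.cons k₀ k := rfl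
    rw [he, chainW_cons, Fin.prod_univ_succ]
    simp only [Fin.cons_zero, Fin.cons_succ]
    ring

/-! ### Sums over permutations -/

/-- Both sides permute the values of `x`, so the termwise inequalities `x (b v) ≤ x (a v)` between
sums with the same total are equalities. -/
theorem eq_of_forall_x_dvd {n : ℕ} {x : Fin n → ℕ} (hxpos : ∀ v, 0 < x v)
    (hxinj : Function.Injective x) {a b : Fin n → Fin n} (ha : Function.Injective a)
    (hb : Function.Injective b) (h : ∀ v, x (b v) ∣ x (a v)) : b = a := by
  have hs : ∑ v, x (b v) = ∑ v, x (a v) :=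
    ((Finite.injective_iff_bijective.mp hb).sum_comp x).trans
      ((Finite.injective_iff_bijective.mp ha).sum_comp x).symm
  have := (Finset.sum_eq_sum_iff_of_le
    (fun v _ => Nat.le_of_dvd (hxpos (a v)) (h v))).mp hs
  funext v
  exact hxinj (this v (Finset.mem_univ v))

open Classical in
/-- The left side is the determinant of the rows `κ v` of the divisibility matrix of the set:
repeated rows make it vanish, and for bijective `κ` only `τ = κ` contributes. -/
theorem sum_sign_divInd {n : ℕ} {x : Fin n → ℕ} (hxpos : ∀ v, 0 < x v)
    (hxinj : Function.Injective x) (κ : Fin n → Fin n) :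
    ∑ τ : Equiv.Perm (Fin n), ((Equiv.Perm.sign τ : ℤ) : ℂ) *
        ∏ v, divInd (x (κ v)) (x (τ v)) =
      if h : Function.Bijective κ then ((Equiv.Perm.sign (Equiv.ofBijective κ h) : ℤ) : ℂ)
        else 0 := by
  split_ifs with h
  · rw [Finset.sum_eq_single (Equiv.ofBijective κ h)]
    · simp [divInd]
    · intro τ _ hτ
      by_contra hne
      refine hτ (Equiv.ext fun v => ?_)
      have hd : ∀ v, x (κ v) ∣ x (τ v) := by
        intro v
        by_contra hv
        exact hne (mul_eq_zero_of_right _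
          (Finset.prod_eq_zero (Finset.mem_univ v) (by simp [divInd, hv])))
      exact (congrFun (eq_of_forall_x_dvd hxpos hxinj τ.injective h.injective hd) v).symm
    · simp
  · have hni : ¬ Function.Injective κ := fun hi => h (Finite.injective_iff_bijective.mp hi)
    obtain ⟨u, v, huv, hne⟩ := Function.not_injective_iff.mp hni
    refine (Matrix.det_apply' (Matrix.of fun w v => divInd (x (κ v)) (x w))).symm.trans ?_
    exact Matrix.det_zero_of_column_eq hne (fun w => by simp [huv])

theorem chainW_const {n m : ℕ} {x : Fin n → ℕ} (hxpos : ∀ v, 0 < x v) (γ : Fin m → ℕ)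
    (hγ : ∀ j, 0 < γ j) (f : Fin (m + 1) → ℕ → ℂ) (ξ : List ℕ → ℂ) (i : Fin n) :
    chainW x γ f ξ i (fun _ => i) = (∏ j : Fin m, f j.castSucc 1) *
      (ξ (List.replicate m (x i)) *
        (aPow ((List.ofFn γ).foldr Nat.lcm 1) (x i) * f (Fin.last m) (x i))) := by
  have hc : (Fin.cons i (fun _ => i) : Fin (m + 1) → Fin n) = fun _ => i := by
    funext j
    refine Fin.cases ?_ (fun j => ?_) j <;> simp
  unfold chainW
  rw [hc, aPow_foldr_lcm (hxpos i) γ hγ]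
  simp only [link, dvd_refl, if_true, Nat.div_self (hxpos i), Finset.prod_mul_distrib,
    List.ofFn_const]
  ring

/-- Chains of nonzero weight descend by divisibility; if every level of the chain is moreover
a permutation in `v`, all levels agree with the initial one. -/
theorem chain_eq_of_ne_zero {n m : ℕ} {x : Fin n → ℕ} (hxpos : ∀ v, 0 < x v)
    (hxinj : Function.Injective x) (γ : Fin m → ℕ) (f : Fin (m + 1) → ℕ → ℂ) (ξ : List ℕ → ℂ)
    (σ : Equiv.Perm (Fin n)) (K : Fin n → Fin m → Fin n)
    (hK : ∀ j, Function.Injective fun v => K v j)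
    (hne : ∀ v, chainW x γ f ξ (σ v) (K v) ≠ 0) : K = fun v _ => σ v := by
  have hd : ∀ v (j : Fin m),
      x (K v j) ∣ x ((Fin.cons (σ v) (K v) : Fin (m + 1) → Fin n) j.castSucc) := by
    intro v j
    by_contra h
    refine hne v (mul_eq_zero_of_right _ (mul_eq_zero_of_left
      (Finset.prod_eq_zero (Finset.mem_univ j) ?_) _))
    simp [link, h]
  have hall : ∀ j : Fin (m + 1),
      (fun v => (Fin.cons (σ v) (K v) : Fin (m + 1) → Fin n) j) = σ := by
    intro j
    induction j using Fin.induction with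
    | zero => simp
    | succ j ih =>
      simp only [Fin.cons_succ]
      refine eq_of_forall_x_dvd hxpos hxinj σ.injective (hK j) fun v => ?_
      rw [← congrFun ih v]
      exact hd v j
  funext v j
  simpa using congrFun (hall j.succ) v

theorem permSign_mul_self {n : ℕ} (σ : Equiv.Perm (Fin n)) :
    ((Equiv.Perm.sign σ : ℤ) : ℂ) * ((Equiv.Perm.sign σ : ℤ) : ℂ) = 1 := by
  rcases Int.units_eq_one_or (Equiv.Perm.sign σ) with h | h <;> simp [h]

/-- For a fixed permutation `σ` of the first axis, the alternating sum over the other axes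
reduces to the constant chains at `σ v`. -/
theorem sum_axes {n m : ℕ} {x : Fin n → ℕ} (hxpos : ∀ v, 0 < x v)
    (hxinj : Function.Injective x) (γ : Fin m → ℕ) (f : Fin (m + 1) → ℕ → ℂ) (ξ : List ℕ → ℂ)
    (σ : Equiv.Perm (Fin n)) :
    ∑ τ : Fin m → Equiv.Perm (Fin n), (∏ j, ((Equiv.Perm.sign (τ j) : ℤ) : ℂ)) *
        ∏ v, ∑ k : Fin m → Fin n,
          chainW x γ f ξ (σ v) k * ∏ j, divInd (x (k j)) (x (τ j v)) =
      ((Equiv.Perm.sign σ : ℤ) : ℂ) ^ m * ∏ v, chainW x γ f ξ (σ v) (fun _ => σ v) := by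
  classical
  have h1 : ∀ τ : Fin m → Equiv.Perm (Fin n),
      (∏ j, ((Equiv.Perm.sign (τ j) : ℤ) : ℂ)) *
        ∏ v, ∑ k : Fin m → Fin n,
          chainW x γ f ξ (σ v) k * ∏ j, divInd (x (k j)) (x (τ j v)) =
      ∑ K : Fin n → Fin m → Fin n, (∏ v, chainW x γ f ξ (σ v) (K v)) *
        ∏ j, (((Equiv.Perm.sign (τ j) : ℤ) : ℂ) * ∏ v, divInd (x (K v j)) (x (τ j v))) := by
    intro τ
    rw [Fintype.prod_sum, Finset.mul_sum]
    refine Finset.sum_congr rfl fun K _ => ?_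
    rw [Finset.prod_mul_distrib, Finset.prod_mul_distrib, Finset.prod_comm]
    ring
  rw [Finset.sum_congr rfl fun τ _ => h1 τ, Finset.sum_comm]
  have h2 : ∀ K : Fin n → Fin m → Fin n,
      ∑ τ : Fin m → Equiv.Perm (Fin n), (∏ v, chainW x γ f ξ (σ v) (K v)) *
        ∏ j, (((Equiv.Perm.sign (τ j) : ℤ) : ℂ) * ∏ v, divInd (x (K v j)) (x (τ j v))) =
      (∏ v, chainW x γ f ξ (σ v) (K v)) *
        ∏ j, if h : Function.Bijective fun v => K v j then
          ((Equiv.Perm.sign (Equiv.ofBijective _ h) : ℤ) : ℂ) else 0 := by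
    intro K
    rw [← Finset.mul_sum, ← Fintype.prod_sum
      (fun j (τ : Equiv.Perm (Fin n)) => ((Equiv.Perm.sign τ : ℤ) : ℂ) *
        ∏ v, divInd (x (K v j)) (x (τ v)))]
    exact congrArg _ (Finset.prod_congr rfl fun j _ => sum_sign_divInd hxpos hxinj _)
  rw [Finset.sum_congr rfl fun K _ => h2 K, Finset.sum_eq_single fun v _ => σ v]
  · have h3 : Equiv.ofBijective (fun v => σ v) σ.bijective = σ := Equiv.ext fun _ => rfl
    simp only [dif_pos σ.bijective, h3, Finset.prod_const, Finset.card_univ, Fintype.card_fin]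
    ring
  · intro K _ hK
    by_contra hne
    refine hK (chain_eq_of_ne_zero hxpos hxinj γ f ξ σ K (fun j => ?_) fun v hv => ?_)
    · by_contra hj
      refine hne (mul_eq_zero_of_right _ (Finset.prod_eq_zero (Finset.mem_univ j) ?_))
      exact dif_neg fun hb => hj hb.injective
    · exact hne (mul_eq_zero_of_left (Finset.prod_eq_zero (Finset.mem_univ v) hv) _)
  · simp

/-- Corollary 4.7: for a factor-closed set `S = {x_1,…,x_n}`, with
`I = {2,…,m+1}` for even `m` and `I = {1,…,m+1}` for odd `m`,
`det_I(S^{γ,ξ}_f(x_{i_1},…,x_{i_{m+1}}))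
  = (f_1(1)⋯f_m(1))^n ∏_{v=1}^n ξ(x_v,…,x_v) f_{m+1}^{[lcm(γ_1,…,γ_m)]}(x_v)`. -/
theorem stmt_19 (n : ℕ) (hn : 0 < n) (x : Fin n → ℕ)
    (hxpos : ∀ v, 0 < x v) (hxinj : Function.Injective x)
    (hfc : ∀ v : Fin n, ∀ d : ℕ, d ∣ x v → ∃ w : Fin n, x w = d)
    (m : ℕ) (hm : 1 ≤ m) (γ : Fin m → ℕ) (hγ : ∀ j, 0 < γ j)
    (f : Fin (m + 1) → ℕ → ℂ) (ξ : List ℕ → ℂ) :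
    hypDet n
        (if Even m then Finset.univ.filter (fun j : Fin (m + 1) => j ≠ 0)
          else Finset.univ)
        (fun idx : Fin (m + 1) → Fin n =>
          mRamW (List.ofFn γ) (List.ofFn f) ξ (List.ofFn fun j => x (idx j)))
      = (∏ j : Fin m, f j.castSucc 1) ^ n *
          ∏ v : Fin n,
            ξ (List.replicate m (x v)) *
              (aPow ((List.ofFn γ).foldr Nat.lcm 1) (x v) * f (Fin.last m) (x v)) := by
  have hsign : ∀ (σ : Equiv.Perm (Fin n)) (τ : Fin m → Equiv.Perm (Fin n)),
      ∏ j ∈ (if Even m then Finset.univ.filter (fun j : Fin (m + 1) => j ≠ 0)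
          else Finset.univ),
        ((Equiv.Perm.sign ((Fin.cons σ τ : Fin (m + 1) → Equiv.Perm (Fin n)) j) : ℤ) : ℂ) =
      (if Even m then 1 else ((Equiv.Perm.sign σ : ℤ) : ℂ)) *
        ∏ j, ((Equiv.Perm.sign (τ j) : ℤ) : ℂ) := by
    intro σ τ
    split_ifs with h
    · rw [Finset.prod_filter, Fin.prod_univ_succ]
      simp
    · rw [Fin.prod_univ_succ]
      simp
  have heven : ∀ σ : Equiv.Perm (Fin n),
      (if Even m then 1 else ((Equiv.Perm.sign σ : ℤ) : ℂ)) *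
        ((Equiv.Perm.sign σ : ℤ) : ℂ) ^ m = 1 := by
    intro σ
    split_ifs with h
    · obtain ⟨r, rfl⟩ := h
      rw [one_mul, pow_add, ← mul_pow, permSign_mul_self, one_pow]
    · obtain ⟨r, rfl⟩ := Nat.not_even_iff_odd.mp h
      rw [← pow_succ', show 2 * r + 1 + 1 = (r + 1) + (r + 1) by ring, pow_add, ← mul_pow,
        permSign_mul_self, one_pow]
  unfold hypDet
  rw [← (Fin.consEquiv fun _ : Fin (m + 1) => Equiv.Perm (Fin n)).sum_comp,
    Fintype.sum_prod_type]
  have hterm : ∀ σ : Equiv.Perm (Fin n), ∑ τ : Fin m → Equiv.Perm (Fin n),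
      (∏ j ∈ (if Even m then Finset.univ.filter (fun j : Fin (m + 1) => j ≠ 0)
          else Finset.univ),
        ((Equiv.Perm.sign ((Fin.consEquiv fun _ : Fin (m + 1) => Equiv.Perm (Fin n))
          (σ, τ) j) : ℤ) : ℂ)) *
      ∏ v : Fin n, mRamW (List.ofFn γ) (List.ofFn f) ξ (List.ofFn fun j =>
        x ((Fin.consEquiv fun _ : Fin (m + 1) => Equiv.Perm (Fin n)) (σ, τ) j v)) =
      ∏ v, chainW x γ f ξ v (fun _ => v) := by
    intro σ
    have hA : ∀ (τ : Fin m → Equiv.Perm (Fin n)) (v : Fin n),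
        mRamW (List.ofFn γ) (List.ofFn f) ξ (List.ofFn fun j =>
          x ((Fin.cons σ τ : Fin (m + 1) → Equiv.Perm (Fin n)) j v)) =
        ∑ k : Fin m → Fin n,
          chainW x γ f ξ (σ v) k * ∏ j, divInd (x (k j)) (x (τ j v)) := by
      intro τ v
      rw [List.ofFn_succ
        (f := fun j => x ((Fin.cons σ τ : Fin (m + 1) → Equiv.Perm (Fin n)) j v))]
      exact mRamW_eq_sum hxpos hxinj hfc γ hγ f ξ (σ v) (fun j => τ j v)
    simp only [Fin.consEquiv_apply, hA, hsign, mul_assoc]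
    rw [← Finset.mul_sum, sum_axes hxpos hxinj, ← mul_assoc, heven, one_mul]
    exact Equiv.prod_comp σ (fun w => chainW x γ f ξ w (fun _ => w))
  rw [Finset.sum_congr rfl fun σ _ => hterm σ, Finset.sum_const, Finset.card_univ,
    Fintype.card_perm, Fintype.card_fin, nsmul_eq_mul, ← mul_assoc,
    inv_mul_cancel₀ (Nat.cast_ne_zero.mpr n.factorial_ne_zero), one_mul,
    Finset.prod_congr rfl fun v _ => chainW_const hxpos γ hγ f ξ v,
    Finset.prod_mul_distrib, Finset.prod_const, Finset.card_univ, Fintype.card_fin]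
end
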